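/- Fix t > 0 with t ≠ 2 and x ∈ ℝ, and let ν_n = Φ(g_n)^{n−1} − (1 − Φ(g_n))^{n−1} where g_n = (c_n x + d_n)^{1/t}, defined for n large enough that c_n x + d_n > 0. Then as n → ∞, ν_n = Λ(x) ( 1 + e^{−x} b_n^{−2} (1 + x + ((2−t)/2) x²) − e^{−x} b_n^{−4} ( 3 + 3x + (3/2) x² + ((2−t)(2t+1)/6) x³ + ((t−2)²/8) x⁴ − (e^{−x}/2)(1 + x + ((2−t)/2) x²)² ) + O(b_n^{−6}) ). -/

import Mathlib

open Real Filter Topology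

/-- The standard normal distribution function. -/
noncomputable def stdNormalCDF (x : ℝ) : ℝ :=
  ∫ u in Set.Iic x, Real.exp (-u ^ 2 / 2) / Real.sqrt (2 * Real.pi)

/-- The Gumbel distribution function `Λ(x) = exp(−e^{−x})`. -/
noncomputable def gumbel (x : ℝ) : ℝ := Real.exp (-Real.exp (-x))
open Asymptotics MeasureTheory

/-- second-order expansion of `f` in the small parameter `s`. -/
def NuJet (s f : ℕ → ℝ) (a0 a1 a2 : ℝ) : Prop :=
  (fun n => f n - (a0 + a1 * s n + a2 * s n ^ 2)) =O[atTop] (fun n => s n ^ 3)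

lemma NuJet.congr {s f h : ℕ → ℝ} {a0 a1 a2 b0 b1 b2 : ℝ} (hf : NuJet s f a0 a1 a2)
    (hfh : f =ᶠ[atTop] h) (h0 : a0 = b0) (h1 : a1 = b1) (h2 : a2 = b2) : NuJet s h b0 b1 b2 := by
  subst h0 h1 h2
  refine IsBigO.congr' hf ?_ EventuallyEq.rfl
  filter_upwards [hfh] with n hn
  rw [hn]

lemma NuJet.add {s f h : ℕ → ℝ} {a0 a1 a2 b0 b1 b2 : ℝ} (hf : NuJet s f a0 a1 a2)
    (hh : NuJet s h b0 b1 b2) :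
    NuJet s (fun n => f n + h n) (a0 + b0) (a1 + b1) (a2 + b2) := by
  refine (IsBigO.add hf hh).congr_left ?_
  intro n; ring

lemma NuJet.const (s : ℕ → ℝ) (a : ℝ) : NuJet s (fun _ => a) a 0 0 := by
  refine (isBigO_zero _ _).congr_left ?_
  intro n; simp

lemma NuJet.self (s : ℕ → ℝ) : NuJet s s 0 1 0 := by
  refine (isBigO_zero _ _).congr_left ?_
  intro n; simp

lemma NuJet.bounded {s f : ℕ → ℝ} {a0 a1 a2 : ℝ} (hs : Tendsto s atTop (𝓝 0))
    (hf : NuJet s f a0 a1 a2) : f =O[atTop] (fun _ => (1 : ℝ)) := by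
  have h1 : Tendsto (fun n => a0 + a1 * s n + a2 * s n ^ 2) atTop
      (𝓝 (a0 + a1 * 0 + a2 * 0 ^ 2)) :=
    ((tendsto_const_nhds.add (hs.const_mul a1))).add ((hs.pow 2).const_mul a2)
  have h2 := h1.isBigO_one ℝ
  have h3 : (fun n => s n ^ 3) =O[atTop] (fun _ => (1 : ℝ)) := (hs.pow 3).isBigO_one ℝ
  refine ((IsBigO.trans hf h3).add h2).congr_left ?_
  intro n; ring

lemma NuJet.mul {s f h : ℕ → ℝ} {a0 a1 a2 b0 b1 b2 : ℝ} (hs : Tendsto s atTop (𝓝 0))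
    (hf : NuJet s f a0 a1 a2) (hh : NuJet s h b0 b1 b2) :
    NuJet s (fun n => f n * h n) (a0 * b0) (a0 * b1 + a1 * b0) (a0 * b2 + a1 * b1 + a2 * b0) := by
  have hbh := hh.bounded hs
  have h1 : Tendsto (fun n => a0 + a1 * s n + a2 * s n ^ 2) atTop
      (𝓝 (a0 + a1 * 0 + a2 * 0 ^ 2)) :=
    ((tendsto_const_nhds.add (hs.const_mul a1))).add ((hs.pow 2).const_mul a2)
  have h2 := h1.isBigO_one ℝ
  have h3 : Tendsto (fun n => a1 * b2 + a2 * b1 + a2 * b2 * s n) atTop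
      (𝓝 (a1 * b2 + a2 * b1 + a2 * b2 * 0)) := tendsto_const_nhds.add (hs.const_mul _)
  have h4 := (h3.isBigO_one ℝ).mul (isBigO_refl (fun n => s n ^ 3) atTop)
  have h5 := IsBigO.mul hf hbh
  have h6 := IsBigO.mul h2 hh
  simp only [mul_one, one_mul] at h4 h5 h6
  refine ((h5.add h6).add h4).congr_left ?_
  intro n; ring

lemma NuJet.of_isBigO {s f h : ℕ → ℝ} {a0 a1 a2 : ℝ}
    (hf : NuJet s f a0 a1 a2) (hh : (fun n => h n - f n) =O[atTop] (fun n => s n ^ 3)) :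
    NuJet s h a0 a1 a2 := by
  refine (IsBigO.add hf hh).congr_left ?_
  intro n; ring

lemma NuJet.exp {s f : ℕ → ℝ} {a0 a1 a2 : ℝ} (hs : Tendsto s atTop (𝓝 0))
    (hf : NuJet s f a0 a1 a2) :
    NuJet s (fun n => Real.exp (f n)) (Real.exp a0) (Real.exp a0 * a1)
      (Real.exp a0 * (a2 + a1 ^ 2 / 2)) := by
  have hd : NuJet s (fun n => f n + -a0) 0 a1 a2 :=
    (hf.add (NuJet.const s (-a0))).congr EventuallyEq.rfl (by ring) (by ring) (by ring)
  have hdO : (fun n => f n + -a0) =O[atTop] s := by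
    have h3 : Tendsto (fun n => a1 + a2 * s n) atTop
      (𝓝 (a1 + a2 * 0)) := tendsto_const_nhds.add (hs.const_mul _)
    have h4 := (h3.isBigO_one ℝ).mul (isBigO_refl s atTop)
    have h5 := ((hs.pow 2).isBigO_one ℝ).mul (isBigO_refl s atTop)
    simp only [one_mul] at h4 h5
    have h6 := IsBigO.trans (IsBigO.congr_right hd (g₂ := fun n => s n ^ 2 * s n)
      (fun n => by ring)) h5
    refine (h6.add h4).congr_left ?_
    intro n; ring
  have hd0 : Tendsto (fun n => f n + -a0) atTop (𝓝 0) := hdO.trans_tendsto hs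
  have he := (Real.exp_sub_sum_range_isBigO_pow 3).comp_tendsto hd0
  have he2 := he.trans (hdO.pow 3)
  have hq := ((NuJet.const s 1).add hd).add ((NuJet.const s (1/2)).mul hs (hd.mul hs hd))
  have hr := hq.of_isBigO (h := fun n => Real.exp (f n + -a0)) (by
    refine he2.congr_left ?_
    intro n
    simp [Finset.sum_range_succ]
    ring)
  refine ((NuJet.const s (Real.exp a0)).mul hs hr).congr ?_ (by ring) (by ring) (by ring)
  refine Eventually.of_forall fun n => ?_
  simp only
  rw [← Real.exp_add]; ring_nf

lemma nu_choose_two (p : ℝ) : Ring.choose p 2 = p * (p - 1) / 2 := by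
  rw [Ring.choose_eq_smul]
  simp [descPochhammer_succ_right, Polynomial.smeval_mul, Polynomial.smeval_sub]
  ring

lemma nu_choose_three (p : ℝ) : Ring.choose p 3 = p * (p - 1) * (p - 2) / 6 := by
  rw [Ring.choose_eq_smul]
  have h2 : Polynomial.smeval (2 : Polynomial ℤ) p = 2 := by
    have := Polynomial.smeval_natCast ℤ p 2
    simpa using this
  simp [descPochhammer_succ_right, Polynomial.smeval_mul, Polynomial.smeval_sub, Nat.factorial, h2]
  ring

lemma nu_rpow_taylor4 (p : ℝ) : (fun z : ℝ => (1 + z) ^ p -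
    (1 + p * z + p * (p - 1) / 2 * z ^ 2 + p * (p - 1) * (p - 2) / 6 * z ^ 3)) =O[𝓝 0]
    (fun z => z ^ 4) := by
  have h := (Real.one_add_rpow_hasFPowerSeriesAt_zero (a := p)).isBigO_sub_partialSum_pow 4
  rw [← isBigO_norm_right]
  refine (h.congr_left ?_).congr_right ?_
  · intro z
    simp [FormalMultilinearSeries.partialSum, Finset.sum_range_succ, nu_choose_two,
      nu_choose_three, binomialSeries]
    ring
  · intro z; simp

lemma nu_rpow_taylor3 (p : ℝ) : (fun z : ℝ => (1 + z) ^ p -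
    (1 + p * z + p * (p - 1) / 2 * z ^ 2)) =O[𝓝 0]
    (fun z => z ^ 3) := by
  have h := (Real.one_add_rpow_hasFPowerSeriesAt_zero (a := p)).isBigO_sub_partialSum_pow 3
  rw [← isBigO_norm_right]
  refine (h.congr_left ?_).congr_right ?_
  · intro z
    simp [FormalMultilinearSeries.partialSum, Finset.sum_range_succ, nu_choose_two, binomialSeries]
    ring
  · intro z; simp

/-- jet of `(1+ a s)^p`. -/
lemma NuJet.rpow {s : ℕ → ℝ} (hs : Tendsto s atTop (𝓝 0)) (a p : ℝ) :
    NuJet s (fun n => (1 + a * s n) ^ p) 1 (p * a) (p * (p - 1) / 2 * a ^ 2) := by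
  have h0 : Tendsto (fun n => a * s n) atTop (𝓝 0) := by simpa using hs.const_mul a
  have h := (nu_rpow_taylor3 p).comp_tendsto h0
  have h2 : (fun n => (a * s n) ^ 3) =O[atTop] (fun n => s n ^ 3) :=
    ((isBigO_refl s atTop).const_mul_left a).pow 3
  refine (h.trans h2).congr_left ?_
  intro n; simp only [Function.comp]; ring

/-- jet of `((1+ a s)^p - 1)/s`. -/
lemma NuJet.rpow_div {s : ℕ → ℝ} (hs : Tendsto s atTop (𝓝 0)) (hs0 : ∀ᶠ n in atTop, 0 < s n)
    (a p : ℝ) :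
    NuJet s (fun n => ((1 + a * s n) ^ p - 1) / s n) (p * a) (p * (p - 1) / 2 * a ^ 2)
      (p * (p - 1) * (p - 2) / 6 * a ^ 3) := by
  have h0 : Tendsto (fun n => a * s n) atTop (𝓝 0) := by simpa using hs.const_mul a
  have h := (nu_rpow_taylor4 p).comp_tendsto h0
  have h2 : (fun n => (a * s n) ^ 4) =O[atTop] (fun n => s n ^ 4) :=
    ((isBigO_refl s atTop).const_mul_left a).pow 4
  have h3 := (h.trans h2).mul (isBigO_refl (fun n => (s n)⁻¹) atTop)
  refine h3.congr' ?_ ?_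
  · filter_upwards [hs0] with n hn
    simp only [Function.comp]
    field_simp
    ring
  · filter_upwards [hs0] with n hn
    field_simp

lemma nu_pdf_integrable : Integrable (fun u : ℝ => Real.exp (-u ^ 2 / 2) / Real.sqrt (2 * Real.pi)) := by
  have := (integrable_exp_neg_mul_sq (b := 1/2) (by norm_num)).div_const (Real.sqrt (2 * Real.pi))
  refine this.congr (Eventually.of_forall fun u => ?_)
  simp only
  congr 2; ring

lemma nu_one_sub_cdf (g : ℝ) : 1 - stdNormalCDF g =
    ∫ u in Set.Ioi g, Real.exp (-u ^ 2 / 2) / Real.sqrt (2 * Real.pi) := by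
  have h1 := intervalIntegral.integral_Iic_add_Ioi (b := g) nu_pdf_integrable.integrableOn
    nu_pdf_integrable.integrableOn
  have h2 : ∫ u : ℝ, Real.exp (-u ^ 2 / 2) / Real.sqrt (2 * Real.pi) = 1 := by
    rw [integral_div]
    have := integral_gaussian (1/2)
    have e : (fun u : ℝ => Real.exp (-u ^ 2 / 2)) = fun u => Real.exp (-(1/2) * u ^ 2) := by
      ext u; congr 1; ring
    rw [e, this, show π / (1/2) = 2 * π by ring]
    exact div_self (by positivity)
  rw [h2] at h1
  unfold stdNormalCDF
  linarith

/-- Mills-type approximation of the Gaussian tail. -/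
noncomputable def nuMills (u : ℝ) : ℝ :=
  Real.exp (-u ^ 2 / 2) / Real.sqrt (2 * Real.pi) * (u⁻¹ - (u⁻¹) ^ 3 + 3 * (u⁻¹) ^ 5)

lemma nu_mills_deriv (u : ℝ) (hu : 0 < u) : HasDerivAt nuMills
    (-(Real.exp (-u ^ 2 / 2) / Real.sqrt (2 * Real.pi)) * (1 + 15 * (u⁻¹) ^ 6)) u := by
  have hi := hasDerivAt_inv hu.ne'
  have h1 : HasDerivAt (fun u : ℝ => Real.exp (-u ^ 2 / 2)) (Real.exp (-u ^ 2 / 2) * (-u)) u := by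
    have : HasDerivAt (fun u : ℝ => -u ^ 2 / 2) (-u) u := by
      have := ((hasDerivAt_pow 2 u).neg).div_const 2
      refine this.congr_deriv ?_
      norm_num
      ring
    exact this.exp
  have h2 := (h1.div_const (Real.sqrt (2 * Real.pi))).mul
    ((hi.sub (hi.pow 3)).add ((hi.pow 5).const_mul 3))
  refine h2.congr_deriv ?_
  simp only [Pi.sub_apply, Pi.pow_apply, Pi.add_apply]
  norm_num
  field_simp
  ring

lemma nu_mills_tendsto : Tendsto nuMills atTop (𝓝 0) := by
  have hi : Tendsto (fun u : ℝ => u⁻¹) atTop (𝓝 0) := tendsto_inv_atTop_zero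
  have h1 : Tendsto (fun u : ℝ => (u⁻¹ - (u⁻¹) ^ 3 + 3 * (u⁻¹) ^ 5)) atTop
      (𝓝 (0 - 0 ^ 3 + 3 * 0 ^ 5)) := (hi.sub (hi.pow 3)).add ((hi.pow 5).const_mul 3)
  have h2 : Tendsto (fun u : ℝ => (1 / Real.sqrt (2 * Real.pi)) * (u⁻¹ - (u⁻¹) ^ 3 + 3 * (u⁻¹) ^ 5))
      atTop (𝓝 0) := by
    simpa using h1.const_mul (1 / Real.sqrt (2 * Real.pi))
  have h3 := h2.norm
  rw [norm_zero] at h3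
  refine squeeze_zero_norm (fun u => ?_) h3
  unfold nuMills
  rw [norm_mul, norm_mul]
  gcongr
  rw [Real.norm_of_nonneg (by positivity), Real.norm_of_nonneg (by positivity)]
  gcongr
  rw [Real.exp_le_one_iff]
  nlinarith [sq_nonneg u]

lemma nu_tail_bound (g : ℝ) (hg : 0 < g) : 0 ≤ 1 - stdNormalCDF g ∧
    |(1 - stdNormalCDF g) - nuMills g| ≤ 15 * (g⁻¹) ^ 6 * nuMills g := by
  have hneg : ∀ u ∈ Set.Ioi g, -(Real.exp (-u ^ 2 / 2) / Real.sqrt (2 * Real.pi)) *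
      (1 + 15 * (u⁻¹) ^ 6) ≤ 0 := by
    intro u hu
    rw [neg_mul, neg_nonpos]; positivity
  have hder : ∀ u ∈ Set.Ici g, HasDerivAt nuMills (-(Real.exp (-u ^ 2 / 2) /
      Real.sqrt (2 * Real.pi)) * (1 + 15 * (u⁻¹) ^ 6)) u := fun u hu =>
    nu_mills_deriv u (hg.trans_le hu)
  have hint := integral_Ioi_of_hasDerivAt_of_nonpos' hder hneg nu_mills_tendsto
  have hI := integrableOn_Ioi_deriv_of_nonpos' hder hneg nu_mills_tendsto
  have hφ : IntegrableOn (fun u : ℝ => Real.exp (-u ^ 2 / 2) / Real.sqrt (2 * Real.pi))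
    (Set.Ioi g) := nu_pdf_integrable.integrableOn
  rw [nu_one_sub_cdf]
  set T := ∫ u in Set.Ioi g, Real.exp (-u ^ 2 / 2) / Real.sqrt (2 * Real.pi) with hT
  have hT0 : 0 ≤ T := integral_nonneg fun u => by positivity
  have hle : T ≤ nuMills g := by
    have : T ≤ ∫ u in Set.Ioi g, -(-(Real.exp (-u ^ 2 / 2) / Real.sqrt (2 * Real.pi)) *
      (1 + 15 * (u⁻¹) ^ 6)) := by
      refine setIntegral_mono_on hφ hI.neg measurableSet_Ioi fun u hu => ?_
      rw [neg_mul, neg_neg]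
      refine le_mul_of_one_le_right (by positivity) ?_
      have : 0 ≤ 15 * (u⁻¹) ^ 6 := by positivity
      linarith
    rw [integral_neg, hint] at this
    linarith
  have hge : nuMills g ≤ (1 + 15 * (g⁻¹) ^ 6) * T := by
    have : ∫ u in Set.Ioi g, -(-(Real.exp (-u ^ 2 / 2) / Real.sqrt (2 * Real.pi)) *
      (1 + 15 * (u⁻¹) ^ 6)) ≤ ∫ u in Set.Ioi g, (1 + 15 * (g⁻¹) ^ 6) *
        (Real.exp (-u ^ 2 / 2) / Real.sqrt (2 * Real.pi)) := by
      refine setIntegral_mono_on hI.neg (hφ.const_mul _) measurableSet_Ioi fun u hu => ?_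
      rw [neg_mul, neg_neg, mul_comm]
      have hu' : g < u := hu
      have hu0 : 0 ≤ u⁻¹ := inv_nonneg.2 (hg.trans hu').le
      gcongr
    rw [integral_neg, hint, integral_const_mul] at this
    linarith
  refine ⟨hT0, ?_⟩
  have h6 : 0 ≤ 15 * (g⁻¹) ^ 6 := by positivity
  rw [abs_le]
  constructor <;> nlinarith

lemma nu_b_tendsto (b : ℕ → ℝ)
    (hb : ∀ n : ℕ, 1 ≤ n → 0 < b n ∧
      2 * Real.pi * (b n) ^ 2 * Real.exp ((b n) ^ 2) = (n : ℝ) ^ 2) :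
    Tendsto b atTop atTop := by
  rw [tendsto_atTop]
  intro M
  have h1 : ∀ᶠ n : ℕ in atTop, 2 * Real.pi * M ^ 2 * Real.exp (M ^ 2) < (n : ℝ) := 
    tendsto_natCast_atTop_atTop.eventually_gt_atTop _
  filter_upwards [h1, eventually_ge_atTop 1] with n hn hn1
  obtain ⟨h0, h2⟩ := hb n hn1
  by_contra! hlt
  have h3 : (n : ℝ) ^ 2 ≤ 2 * Real.pi * M ^ 2 * Real.exp (M ^ 2) := by
    rw [← h2]; gcongr
  have h4 : (1 : ℝ) ≤ n := by exact_mod_cast hn1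
  nlinarith

lemma nu_inv_n (b : ℕ → ℝ)
    (hb : ∀ n : ℕ, 1 ≤ n → 0 < b n ∧
      2 * Real.pi * (b n) ^ 2 * Real.exp ((b n) ^ 2) = (n : ℝ) ^ 2) :
    (fun n : ℕ => ((n : ℝ))⁻¹) =O[atTop] (fun n => (1 / (b n) ^ 2) ^ 3) := by
  refine IsBigO.of_bound 27 ?_
  filter_upwards [(nu_b_tendsto b hb).eventually_ge_atTop 1, eventually_ge_atTop 1] with n hn hn1
  obtain ⟨h0, h2⟩ := hb n hn1
  have h4 : (1 : ℝ) ≤ n := by exact_mod_cast hn1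
  have h5 : ((b n) ^ 2) ^ 6 / (Nat.factorial 6 : ℕ) ≤ Real.exp ((b n) ^ 2) :=
    Real.pow_div_factorial_le_exp _ (by positivity) 6
  have h6 : (1 : ℝ) ≤ 2 * Real.pi * (b n) ^ 2 := by
    nlinarith [Real.pi_gt_three]
  have h7 : ((b n) ^ 6 / 27) ^ 2 ≤ (n : ℝ) ^ 2 := by
    rw [← h2]
    have h8 : Real.exp ((b n) ^ 2) ≤ 2 * Real.pi * (b n) ^ 2 * Real.exp ((b n) ^ 2) :=
      le_mul_of_one_le_left (by positivity) h6
    refine le_trans ?_ (h5.trans h8)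
    have : (0 : ℝ) ≤ (b n) ^ 12 := by positivity
    norm_num [Nat.factorial]
    ring_nf
    linarith
  have h9 : (b n) ^ 6 / 27 ≤ (n : ℝ) := le_of_sq_le_sq h7 (by positivity)
  rw [Real.norm_of_nonneg (by positivity), Real.norm_of_nonneg (by positivity)]
  calc ((n : ℝ))⁻¹ ≤ ((b n) ^ 6 / 27)⁻¹ := by gcongr
    _ = 27 * (1 / (b n) ^ 2) ^ 3 := by field_simp

lemma nu_n_mills (B N w : ℝ) (hB : 0 < B) (hw : 0 < w) (hN : 0 < N)
    (h : 2 * Real.pi * B ^ 2 * Real.exp (B ^ 2) = N ^ 2) :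
    N * nuMills (B * w) = w⁻¹ * Real.exp (-1 / 2 * ((w ^ 2 - 1) / (1 / B ^ 2))) *
      (1 + -1 * ((1 / B ^ 2) * (w⁻¹ * w⁻¹)) +
        3 * (((1 / B ^ 2) * (w⁻¹ * w⁻¹)) * ((1 / B ^ 2) * (w⁻¹ * w⁻¹)))) := by
  have hNe : N = Real.sqrt (2 * Real.pi) * B * Real.exp (B ^ 2 / 2) := by
    have h1 : (Real.sqrt (2 * Real.pi) * B * Real.exp (B ^ 2 / 2)) ^ 2 = N ^ 2 := by
      rw [mul_pow, mul_pow, Real.sq_sqrt (by positivity), ← h, ← Real.exp_nat_mul]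
      congr 2
      push_cast; ring
    exact ((pow_left_inj₀ (by positivity) hN.le two_ne_zero).1 h1).symm
  have hE : Real.exp (-1 / 2 * ((w ^ 2 - 1) / (1 / B ^ 2))) =
      Real.exp (B ^ 2 / 2) * Real.exp (-(B * w) ^ 2 / 2) := by
    rw [← Real.exp_add]
    congr 1
    field_simp
    ring
  rw [hE, hNe]
  unfold nuMills
  have : Real.sqrt (2 * Real.pi) ≠ 0 := by positivity
  generalize Real.exp (B ^ 2 / 2) = e1
  generalize Real.exp (-(B * w) ^ 2 / 2) = e2
  field_simp
  try ring

lemma nu_K_jet {s : ℕ → ℝ} (hs : Tendsto s atTop (𝓝 0)) (hs0 : ∀ᶠ n in atTop, 0 < s n)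
    (t : ℝ) (ht : 0 < t) (x : ℝ) :
    NuJet s (fun n => (1 + t * x * s n) ^ (-1 / t) *
      Real.exp (-1 / 2 * (((1 + t * x * s n) ^ (2 / t) - 1) / s n)) *
      (1 + -1 * (s n * ((1 + t * x * s n) ^ (-1 / t) * (1 + t * x * s n) ^ (-1 / t))) +
        3 * ((s n * ((1 + t * x * s n) ^ (-1 / t) * (1 + t * x * s n) ^ (-1 / t))) *
          (s n * ((1 + t * x * s n) ^ (-1 / t) * (1 + t * x * s n) ^ (-1 / t))))))
      (Real.exp (-x)) (-Real.exp (-x) * (1 + x + (2 - t) / 2 * x ^ 2))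
      (Real.exp (-x) * (3 + 3 * x + 3 / 2 * x ^ 2 + (2 - t) * (2 * t + 1) / 6 * x ^ 3 +
              (t - 2) ^ 2 / 8 * x ^ 4)) := by
  have hu : NuJet s (fun n => (1 + t * x * s n) ^ (-1 / t)) 1 (-x) ((1 + t) / 2 * x ^ 2) := by
    refine (NuJet.rpow hs (t * x) (-1 / t)).congr EventuallyEq.rfl rfl ?_ ?_
    · field_simp
    · field_simp; ring
  have he : NuJet s (fun n => ((1 + t * x * s n) ^ (2 / t) - 1) / s n) (2 * x)
      ((2 - t) * x ^ 2) ((2 - t) * (2 - 2 * t) / 3 * x ^ 3) := by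
    refine (NuJet.rpow_div hs hs0 (t * x) (2 / t)).congr EventuallyEq.rfl ?_ ?_ ?_
    · field_simp
    · field_simp
    · field_simp; try ring
  have hE := ((NuJet.const s (-1 / 2)).mul hs he).exp hs
  have hv := (NuJet.self s).mul hs (hu.mul hs hu)
  have hp := ((NuJet.const s 1).add ((NuJet.const s (-1)).mul hs hv)).add
    ((NuJet.const s 3).mul hs (hv.mul hs hv))
  have hx : Real.exp (-1 / 2 * (2 * x)) = Real.exp (-x) := by congr 1; ring
  rw [hx] at hE
  refine ((hu.mul hs hE).mul hs hp).congr EventuallyEq.rfl ?_ ?_ ?_ <;> ring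

theorem powered_extremes_nu_expansion_t_ne_two
    (b : ℕ → ℝ)
    (hb : ∀ n : ℕ, 1 ≤ n → 0 < b n ∧
      2 * Real.pi * (b n) ^ 2 * Real.exp ((b n) ^ 2) = (n : ℝ) ^ 2)
    (t : ℝ) (ht : 0 < t) (ht2 : t ≠ 2) (x : ℝ)
    (c d g ν : ℕ → ℝ)
    (hc : ∀ n : ℕ, c n = t * b n ^ (t - 2))
    (hd : ∀ n : ℕ, d n = b n ^ t)
    (hg : ∀ n : ℕ, g n = (c n * x + d n) ^ (1 / t))
    (hν : ∀ n : ℕ, ν n = stdNormalCDF (g n) ^ (n - 1) -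
      (1 - stdNormalCDF (g n)) ^ (n - 1)) :
    ∃ C > (0 : ℝ), ∃ N : ℕ, ∀ n : ℕ, N ≤ n →
      0 < c n * x + d n ∧
      |ν n -
        gumbel x * (1 + Real.exp (-x) / (b n) ^ 2 * (1 + x + (2 - t) / 2 * x ^ 2) -
          Real.exp (-x) / (b n) ^ 4 *
            (3 + 3 * x + 3 / 2 * x ^ 2 + (2 - t) * (2 * t + 1) / 6 * x ^ 3 +
              (t - 2) ^ 2 / 8 * x ^ 4 -
              Real.exp (-x) / 2 * (1 + x + (2 - t) / 2 * x ^ 2) ^ 2))|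
      ≤ C / (b n) ^ 6 := by
  have hbt := nu_b_tendsto b hb
  have hinv := nu_inv_n b hb
  obtain ⟨s, hsdef⟩ : ∃ s : ℕ → ℝ, s = fun n => 1 / (b n) ^ 2 := ⟨_, rfl⟩
  have hsn : ∀ n, s n = 1 / (b n) ^ 2 := fun n => by rw [hsdef]
  simp only [← hsn] at hinv
  have hbpos : ∀ᶠ n in atTop, 0 < b n := hbt.eventually_gt_atTop 0
  have hs : Tendsto s atTop (𝓝 0) := by
    have := ((tendsto_pow_atTop two_ne_zero).comp hbt).inv_tendsto_atTop
    refine this.congr fun n => ?_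
    rw [hsn]; simp
  have hs0 : ∀ᶠ n in atTop, 0 < s n := by
    filter_upwards [hbpos] with n hn
    rw [hsn]; positivity
  have hW : ∀ᶠ n in atTop, 0 < 1 + t * x * s n := by
    have : Tendsto (fun n => 1 + t * x * s n) atTop (𝓝 (1 + t * x * 0)) :=
      tendsto_const_nhds.add (hs.const_mul _)
    refine this.eventually (lt_mem_nhds ?_)
    simp
  have hcd : ∀ᶠ n in atTop, c n * x + d n = b n ^ t * (1 + t * x * s n) := by
    filter_upwards [hbpos] with n hn
    rw [hc, hd, hsn, Real.rpow_sub hn]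
    norm_num
    field_simp
    try ring
  have hgw : ∀ᶠ n in atTop, g n = b n * (1 + t * x * s n) ^ (1 / t) := by
    filter_upwards [hbpos, hW, hcd] with n hn hw h
    rw [hg, h, Real.mul_rpow (by positivity) hw.le, ← Real.rpow_mul hn.le,
      mul_one_div_cancel ht.ne', Real.rpow_one]
  have hK := nu_K_jet hs hs0 t ht x
  have hu := (NuJet.rpow hs (t * x) (-1 / t)).bounded hs
  set K : ℕ → ℝ := fun n => (1 + t * x * s n) ^ (-1 / t) *
      Real.exp (-1 / 2 * (((1 + t * x * s n) ^ (2 / t) - 1) / s n)) *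
      (1 + -1 * (s n * ((1 + t * x * s n) ^ (-1 / t) * (1 + t * x * s n) ^ (-1 / t))) +
        3 * ((s n * ((1 + t * x * s n) ^ (-1 / t) * (1 + t * x * s n) ^ (-1 / t))) *
          (s n * ((1 + t * x * s n) ^ (-1 / t) * (1 + t * x * s n) ^ (-1 / t))))) with hKdef
  have hKn : ∀ᶠ n : ℕ in atTop, (n : ℝ) * nuMills (g n) = K n := by
    filter_upwards [hbpos, hW, hgw, eventually_ge_atTop 1] with n hn hw h hn1
    have hw1 : (1 + t * x * s n) ^ (-1 / t) = ((1 + t * x * s n) ^ (1 / t))⁻¹ := by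
      rw [← Real.rpow_neg hw.le]; congr 1; ring
    have hw2 : (1 + t * x * s n) ^ (2 / t) = ((1 + t * x * s n) ^ (1 / t)) ^ 2 := by
      rw [← Real.rpow_mul_natCast hw.le]; congr 1; push_cast; ring
    simp only [hKdef]
    rw [hw1, hw2, h]
    have := nu_n_mills (b n) n ((1 + t * x * s n) ^ (1 / t)) hn (by positivity)
      (by exact_mod_cast hn1) (hb n hn1).2
    rw [← hsn] at this
    exact this
  obtain ⟨q, hqdef⟩ : ∃ q : ℕ → ℝ, q = fun n => 1 - stdNormalCDF (g n) := ⟨_, rfl⟩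
  have hqn : ∀ n, stdNormalCDF (g n) = 1 - q n := fun n => by rw [hqdef]; ring
  have hgpos : ∀ᶠ n in atTop, 0 < g n := by
    filter_upwards [hbpos, hW, hgw] with n hn hw h
    rw [h]; positivity
  have hq0 : ∀ᶠ n in atTop, 0 ≤ q n := by
    filter_upwards [hgpos] with n hn
    have := (nu_tail_bound (g n) hn).1
    rw [hqn] at this; linarith
  have hyK : (fun n : ℕ => (n : ℝ) * q n - K n) =O[atTop] (fun n => s n ^ 3) := by
    have h1 : (fun n => 15 * ((s n) ^ 3 * ((1 + t * x * s n) ^ (-1 / t)) ^ 6) * K n) =O[atTop]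
        (fun n => s n ^ 3) := by
      have := ((((isBigO_refl (fun n => s n ^ 3) atTop).mul (hu.pow 6)).const_mul_left 15)).mul
        (hK.bounded hs)
      simpa using this
    refine IsBigO.trans (IsBigO.of_bound 1 ?_) h1
    filter_upwards [hbpos, hW, hgw, hgpos, hKn] with n hn hw h hg0 hk
    have h2 := (nu_tail_bound (g n) hg0).2
    rw [hqn, sub_sub_cancel] at h2
    have hw1 : (1 + t * x * s n) ^ (-1 / t) = ((1 + t * x * s n) ^ (1 / t))⁻¹ := by
      rw [← Real.rpow_neg hw.le]; congr 1; ring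
    have h3 : (g n)⁻¹ ^ 6 = (s n) ^ 3 * ((1 + t * x * s n) ^ (-1 / t)) ^ 6 := by
      rw [hw1, h, mul_inv, mul_pow, hsn]
      congr 1
      field_simp
    rw [h3] at h2
    rw [← hk, ← mul_sub, norm_mul, one_mul, Real.norm_eq_abs (q n - _), Real.norm_natCast]
    refine le_trans ?_ (Real.le_norm_self _)
    calc (n : ℝ) * |q n - nuMills (g n)| 
        ≤ n * (15 * (s n ^ 3 * ((1 + t * x * s n) ^ (-1 / t)) ^ 6) * nuMills (g n)) := by gcongr
      _ = _ := by ring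
  have hy := hK.of_isBigO hyK
  have hyb := hy.bounded hs
  have hqO : q =O[atTop] (fun n => s n ^ 3) := by
    have := hyb.mul hinv
    simp only [one_mul] at this
    refine this.congr' ?_ EventuallyEq.rfl
    filter_upwards [eventually_ge_atTop 1] with n hn1
    have : (n : ℝ) ≠ 0 := by positivity
    field_simp
  have hqt : Tendsto q atTop (𝓝 0) := hqO.trans_tendsto (by simpa using hs.pow 3)
  have hqhalf : ∀ᶠ n in atTop, q n < 1 / 2 := hqt.eventually (gt_mem_nhds (by norm_num))
  have hL : (fun n : ℕ => ((n : ℝ) - 1) * Real.log (1 - q n) - (-1) * ((n : ℝ) * q n)) =O[atTop]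
      (fun n => s n ^ 3) := by
    have h1 := hqO.mul ((hyb.const_mul_left 2).add (isBigO_refl (fun _ : ℕ => (1 : ℝ)) atTop))
    simp only [mul_one] at h1
    refine IsBigO.trans (IsBigO.of_bound 1 ?_) h1
    filter_upwards [hq0, hqhalf, eventually_ge_atTop 1] with n hn hh hn1
    have h4 : (1 : ℝ) ≤ n := by exact_mod_cast hn1
    have habs : |q n| = q n := abs_of_nonneg hn
    have h5 := Real.abs_log_sub_add_sum_range_le (x := q n) (by rw [habs]; linarith) 1
    simp only [Finset.sum_range_one, habs] at h5
    norm_num at h5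
    have h6 : q n ^ 2 / (1 - q n) ≤ 2 * q n ^ 2 := by
      rw [div_le_iff₀ (by linarith)]
      nlinarith [sq_nonneg (q n)]
    have h7 := h5.trans h6
    rw [one_mul]
    refine le_trans ?_ (Real.le_norm_self _)
    have e : ((n : ℝ) - 1) * Real.log (1 - q n) - (-1) * ((n : ℝ) * q n) =
      ((n : ℝ) - 1) * (q n + Real.log (1 - q n)) + q n := by ring
    rw [e]
    calc ‖((n : ℝ) - 1) * (q n + Real.log (1 - q n)) + q n‖
        ≤ ‖((n : ℝ) - 1) * (q n + Real.log (1 - q n))‖ + ‖q n‖ := norm_add_le _ _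
      _ = ((n : ℝ) - 1) * |q n + Real.log (1 - q n)| + q n := by
        rw [norm_mul, Real.norm_of_nonneg (by linarith : (0 : ℝ) ≤ n - 1),
          Real.norm_of_nonneg hn, Real.norm_eq_abs]
      _ ≤ n * (2 * q n ^ 2) + q n := by gcongr; linarith
      _ = _ := by ring
  have hexp := (((NuJet.const s (-1)).mul hs hy).of_isBigO hL).exp hs
  have hνj := hexp.of_isBigO (h := ν) (by
    refine IsBigO.trans (IsBigO.of_bound 1 ?_) hqO
    filter_upwards [hq0, hqhalf, eventually_ge_atTop 2] with n hn hh hn2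
    have e : Real.exp (((n : ℝ) - 1) * Real.log (1 - q n)) = (1 - q n) ^ (n - 1) := by
      rw [mul_comm, Real.exp_mul, Real.exp_log (by linarith), ← Real.rpow_natCast,
        Nat.cast_sub (by omega), Nat.cast_one]
    rw [e, hν, hqn, sub_sub_cancel, sub_sub_cancel_left, norm_neg, one_mul, norm_pow,
      Real.norm_of_nonneg hn]
    exact pow_le_of_le_one hn (by linarith) (by omega))
  obtain ⟨C, hC, hCb⟩ := hνj.exists_pos
  have hfin := hCb.bound
  obtain ⟨N, hN⟩ := eventually_atTop.1 (hfin.and (hbpos.and (hcd.and hW)))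
  refine ⟨C, hC, N, fun n hn => ?_⟩
  obtain ⟨h1, h2, h3, h4⟩ := hN n hn
  refine ⟨by rw [h3]; positivity, ?_⟩
  rw [Real.norm_eq_abs, Real.norm_of_nonneg (by rw [hsn]; positivity), hsn] at h1
  have e1 : C * (1 / b n ^ 2) ^ 3 = C / b n ^ 6 := by field_simp
  rw [e1] at h1
  refine le_trans (le_of_eq ?_) h1
  congr 1
  unfold gumbel
  rw [neg_one_mul (Real.exp (-x))]
  field_simp
  ring
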